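/- A graph G is 1-copwin if and only if it is dismantlable: its vertices can be ordered v₁, …, v_n such that for each i < n, there is some j > i with the closed neighborhood of v_i in the subgraph induced by {v_i, …, v_n} contained in the closed neighborhood of v_j in that subgraph. -/

import Mathlib

open SimpleGraph

/-- A checker move: stay put or slide along an edge. -/
def ValidMove {V : Type*} (G : SimpleGraph V) (u v : V) : Prop := u = v ∨ G.Adj u v

/-- From position (cops `c`, robber `r`), with the cops to move, the cops can
force capture in finitely many rounds: either some cop can move onto the robber,
or the cops have a move after which every robber move leads to a winning position. -/
inductive CopsWinFrom {V : Type*} (G : SimpleGraph V) (k : ℕ) :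
    (Fin k → V) → V → Prop where
  | catch (c : Fin k → V) (r : V) (c' : Fin k → V)
      (hc : ∀ i, ValidMove G (c i) (c' i)) (hcatch : ∃ i, c' i = r) :
      CopsWinFrom G k c r
  | step (c : Fin k → V) (r : V) (c' : Fin k → V)
      (hc : ∀ i, ValidMove G (c i) (c' i))
      (h : ∀ r', ValidMove G r r' → CopsWinFrom G k c' r') :
      CopsWinFrom G k c r

/-- `k` cops have a winning strategy on `G`. -/
def CopWin {V : Type*} (G : SimpleGraph V) (k : ℕ) : Prop :=
  ∃ init : Fin k → V, ∀ r : V, (∃ i, init i = r) ∨ CopsWinFrom G k init r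

/-- The cop number: least `k` such that `k` cops win. -/
noncomputable def copNumber {V : Type*} (G : SimpleGraph V) : ℕ :=
  sInf {k | CopWin G k}

/-- `p` is a weak cover of `H` by `G`. -/
def IsWeakCover {V W : Type*} (p : V → W) (G : SimpleGraph V) (H : SimpleGraph W) : Prop :=
  Function.Surjective p ∧ ∀ u : V, p '' (G.neighborSet u) = H.neighborSet (p u)

/-!
On a graph with at least two vertices, both sides of the equivalence satisfy the same recursion:
the property holds if and only if some corner `u` can be deleted so that it holds for `G - u`.

For dismantlability this peels off the first vertex of the order. For the game, if no vertex were a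
corner, a single cop could only win from positions where the robber is already within one move:
going backwards in time, if every reply of the robber leaves him within reach of the cop's new
position, that position dominates his, hence equals it. So a cop who wins from a starting vertex is
within one move of all vertices, and then every other vertex is a corner after all. Finally,
deleting a corner `u` dominated by `w` does not change the winner, whatever the number of cops,
because sending `u` to `w` retracts `G` onto `G - u` and strategies can be transported along this
retraction.
-/

/-- The vertex `w` dominates `u`: the closed neighborhood of `u` is contained in that of `w`. -/
def Dominates {V : Type*} (G : SimpleGraph V) (w u : V) : Prop :=
  ∀ x, ValidMove G u x → ValidMove G w x

/-- The vertex `u` is a corner, that is, dominated by another vertex; deleting corners one by one is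
what dismantles a graph. -/
def IsDominated {V : Type*} (G : SimpleGraph V) (u : V) : Prop :=
  ∃ w, w ≠ u ∧ Dominates G w u

/-- A dismantling order lists vertices so that each one but the last is dominated, among itself and
the vertices after it, by a later one. Closed neighborhoods are compared on indices, and the
enumeration `v` is not required to be bijective. -/
def IsDismantlingOrder {V : Type*} (G : SimpleGraph V) {n : ℕ} (v : Fin n → V) : Prop :=
  ∀ i : Fin n, (i : ℕ) + 1 < n → ∃ j, i < j ∧
    ∀ m, i ≤ m → ValidMove G (v i) (v m) → ValidMove G (v j) (v m)

/-- A graph is dismantlable if all its vertices can be enumerated, without repetition, in a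
dismantling order; this forces it to be finite. -/
def Dismantlable {V : Type*} (G : SimpleGraph V) : Prop :=
  ∃ (n : ℕ) (v : Fin n → V), Function.Bijective v ∧ IsDismantlingOrder G v

section Moves

variable {V : Type*} {G : SimpleGraph V}

theorem ValidMove.refl (u : V) : ValidMove G u u := Or.inl rfl

theorem ValidMove.symm {u v : V} (h : ValidMove G u v) : ValidMove G v u :=
  h.imp Eq.symm Adj.symm

theorem validMove_iff_eq_or_adj {u v : V} : ValidMove G u v ↔ v = u ∨ G.Adj u v :=
  or_congr_left eq_comm

theorem validMove_induce {s : Set V} {a b : s} :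
    ValidMove (G.induce s) a b ↔ ValidMove G a b :=
  or_congr_left Subtype.ext_iff

theorem Dominates.refl (u : V) : Dominates G u u := fun _ => id

theorem IsDominated.exists_retraction {u : V} (hu : IsDominated G u) :
    ∃ f : ValidMove G →r ValidMove (G.induce {u}ᶜ),
      Function.LeftInverse f Subtype.val ∧ ∀ x, Dominates G (f x) x := by
  classical
  obtain ⟨w, hwu, hdom⟩ := hu
  let f : V → ({u}ᶜ : Set V) := fun x => if h : x = u then ⟨w, hwu⟩ else ⟨x, h⟩
  have hf_self : f u = ⟨w, hwu⟩ := dif_pos rfl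
  have hf_ne {x : V} (hx : x ≠ u) : f x = ⟨x, hx⟩ := dif_neg hx
  have hf_dom (x : V) : Dominates G (f x) x := by
    obtain rfl | hx := eq_or_ne x u
    · rwa [hf_self]
    · rw [hf_ne hx]
      exact Dominates.refl x
  have hf_move {x y : V} (hxy : ValidMove G x y) : ValidMove G (f x) (f y) := by
    obtain rfl | hy := eq_or_ne y u
    · obtain rfl | hx := eq_or_ne x y
      · exact ValidMove.refl _
      · rw [hf_ne hx]
        exact (hf_dom y x hxy.symm).symm
    · rw [hf_ne hy]
      exact hf_dom x y hxy
  exact ⟨⟨f, fun hxy => validMove_induce.2 (hf_move hxy)⟩, fun x => hf_ne x.2, hf_dom⟩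

end Moves

section Retracts

variable {V W : Type*} {G : SimpleGraph V} {H : SimpleGraph W} {k : ℕ}

theorem CopsWinFrom.of_leftInverse {f : ValidMove G →r ValidMove H}
    {i : ValidMove H →r ValidMove G} (hfi : Function.LeftInverse f i) {c : Fin k → V} {r : W}
    (h : CopsWinFrom G k c (i r)) : CopsWinFrom H k (f ∘ c) r := by
  generalize hs : i r = s at h
  induction h generalizing r with
  | step c s c' hc _ ih =>
    subst hs
    exact .step _ r (f ∘ c') (fun m => f.map_rel (hc m))
      fun r' hr => ih (i r') (i.map_rel hr) rfl
  | _ c s c' hc hcatch =>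
    obtain ⟨j, hj⟩ := hcatch
    refine .catch _ r (f ∘ c') (fun m => f.map_rel (hc m)) ⟨j, ?_⟩
    rw [Function.comp_apply, hj, ← hs, hfi]

theorem CopWin.of_leftInverse {f : ValidMove G →r ValidMove H} {i : ValidMove H →r ValidMove G}
    (hfi : Function.LeftInverse f i) (h : CopWin G k) : CopWin H k := by
  obtain ⟨c, hc⟩ := h
  refine ⟨f ∘ c, fun r => ?_⟩
  refine (hc (i r)).imp ?_ (CopsWinFrom.of_leftInverse hfi)
  rintro ⟨j, hj⟩
  exact ⟨j, by rw [Function.comp_apply, hj, hfi]⟩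

theorem CopsWinFrom.of_validMove {c : Fin k → V} {r : V} {j : Fin k}
    (hj : ValidMove G (c j) r) : CopsWinFrom G k c r := by
  classical
  refine .catch c r (Function.update c j r) (fun m => ?_) ⟨j, Function.update_self ..⟩
  obtain rfl | hm := eq_or_ne m j
  · rwa [Function.update_self]
  · rw [Function.update_of_ne hm]
    exact .refl _

-- The cops chase the image `f r` of the robber. The cop who catches it then dominates the robber's
-- actual position, so the robber is caught one move later.
theorem CopsWinFrom.of_dominates_image {f : ValidMove G →r ValidMove H}
    {i : ValidMove H →r ValidMove G} (hdom : ∀ x, Dominates G (i (f x)) x) {c : Fin k → W} {r : V}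
    (h : CopsWinFrom H k c (f r)) : CopsWinFrom G k (i ∘ c) r := by
  generalize hs : f r = s at h
  induction h generalizing r with
  | step c s c' hc _ ih =>
    subst hs
    exact .step _ r (i ∘ c') (fun m => i.map_rel (hc m))
      fun r' hr => ih (f r') (f.map_rel hr) rfl
  | _ c s c' hc hcatch =>
    obtain ⟨j, rfl⟩ := hcatch
    refine .step _ r (i ∘ c') (fun m => i.map_rel (hc m)) fun r' hr => .of_validMove (j := j) ?_
    rw [Function.comp_apply, ← hs]
    exact hdom r r' hr

theorem CopWin.of_dominates_image {f : ValidMove G →r ValidMove H}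
    {i : ValidMove H →r ValidMove G} (hdom : ∀ x, Dominates G (i (f x)) x) (h : CopWin H k) :
    CopWin G k := by
  obtain ⟨c, hc⟩ := h
  refine ⟨i ∘ c, fun r => .inr ?_⟩
  obtain ⟨j, hj⟩ | hr := hc (f r)
  · refine .of_validMove (j := j) ?_
    rw [Function.comp_apply, hj]
    exact hdom r r (.refl r)
  · exact .of_dominates_image hdom hr

end Retracts

section Dismantling

variable {V : Type*} {G : SimpleGraph V}

theorem IsDominated.copWin_induce_compl_iff {u : V} (hu : IsDominated G u) {k : ℕ} :
    CopWin (G.induce {u}ᶜ) k ↔ CopWin G k := by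
  obtain ⟨f, hf, hdom⟩ := hu.exists_retraction
  let i : ValidMove (G.induce {u}ᶜ) →r ValidMove G := ⟨Subtype.val, validMove_induce.1⟩
  exact ⟨.of_dominates_image (f := f) (i := i) hdom, .of_leftInverse (f := f) (i := i) hf⟩

theorem copWin_of_subsingleton [Nonempty V] [Subsingleton V] (k : ℕ) [NeZero k] : CopWin G k :=
  ⟨fun _ => Classical.arbitrary V, fun _ => .inl ⟨0, Subsingleton.elim _ _⟩⟩

theorem CopsWinFrom.validMove_of_forall_not_isDominated (hG : ∀ u, ¬IsDominated G u)
    {c : Fin 1 → V} {r : V} (h : CopsWinFrom G 1 c r) : ValidMove G (c 0) r := by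
  induction h with
  | step c r c' hc _ ih =>
    have hdom : Dominates G (c' 0) r := ih
    have hcatch : c' 0 = r := by_contra fun hne => hG r ⟨c' 0, hne, hdom⟩
    exact hcatch ▸ hc 0
  | _ c r c' hc hcatch =>
    obtain ⟨j, rfl⟩ := hcatch
    rw [Subsingleton.elim j 0]
    exact hc 0

theorem CopWin.exists_isDominated [Nontrivial V] (h : CopWin G 1) : ∃ u, IsDominated G u := by
  by_contra! hG
  obtain ⟨c, hc⟩ := h
  have hadj (r : V) : ValidMove G (c 0) r := by
    obtain ⟨j, rfl⟩ | hr := hc r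
    · rw [Subsingleton.elim j 0]
      exact .refl _
    · exact hr.validMove_of_forall_not_isDominated hG
  obtain ⟨u, hu⟩ := exists_ne (c 0)
  exact hG u ⟨c 0, hu.symm, fun x _ => hadj x⟩

theorem copWin_one_iff_exists_isDominated [Nontrivial V] :
    CopWin G 1 ↔ ∃ u, IsDominated G u ∧ CopWin (G.induce {u}ᶜ) 1 := by
  refine ⟨fun h => ?_, fun ⟨_, hu, h⟩ => hu.copWin_induce_compl_iff.1 h⟩
  obtain ⟨u, hu⟩ := h.exists_isDominated
  exact ⟨u, hu, hu.copWin_induce_compl_iff.2 h⟩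

theorem dismantlable_of_subsingleton [Nonempty V] [Subsingleton V] : Dismantlable G := by
  refine ⟨1, fun _ => Classical.arbitrary V, ⟨Function.injective_of_subsingleton _, ?_⟩, ?_⟩
  · exact fun x => ⟨0, Subsingleton.elim _ x⟩
  · exact fun i hi => by omega

theorem bijective_cons_val_iff {n : ℕ} {u : V} {t : Fin n → ({u}ᶜ : Set V)} :
    Function.Bijective (Fin.cons u (Subtype.val ∘ t) : Fin (n + 1) → V) ↔
      Function.Bijective t := by
  refine and_congr ?_ ?_
  · rw [Fin.cons_injective_iff, Subtype.val_injective.of_comp_iff, and_iff_right]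
    rintro ⟨i, hi⟩
    exact (t i).2 hi
  · simp only [Function.Surjective, Fin.exists_fin_succ, Fin.cons_zero, Fin.cons_succ,
      Function.comp_apply, Subtype.forall, Set.mem_compl_singleton_iff, Subtype.ext_iff,
      or_iff_not_imp_left, ne_comm]

theorem exists_cons_val_eq {n : ℕ} {v : Fin (n + 1) → V} (hv : Function.Injective v) :
    ∃ (u : V) (t : Fin n → ({u}ᶜ : Set V)), Fin.cons u (Subtype.val ∘ t) = v :=
  ⟨v 0, fun i => ⟨v i.succ, hv.ne i.succ_ne_zero⟩, Fin.cons_self_tail v⟩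

theorem isDismantlingOrder_cons {n : ℕ} {u : V} {v : Fin (n + 1) → V}
    (hv : Function.Surjective (Fin.cons u v : Fin (n + 2) → V)) :
    IsDismantlingOrder G (Fin.cons u v : Fin (n + 2) → V) ↔
      (∃ j, Dominates G (v j) u) ∧ IsDismantlingOrder G v := by
  simp only [Dominates, hv.forall, IsDismantlingOrder]
  simp [Fin.forall_fin_succ (n := n + 1), Fin.exists_fin_succ (n := n + 1)]

theorem isDismantlingOrder_induce {n : ℕ} {s : Set V} {t : Fin n → s} :
    IsDismantlingOrder (G.induce s) t ↔ IsDismantlingOrder G (Subtype.val ∘ t) := by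
  simp only [IsDismantlingOrder, validMove_induce, Function.comp_apply]

theorem isDismantlingOrder_cons_val {n : ℕ} {u : V} {t : Fin (n + 1) → ({u}ᶜ : Set V)}
    (ht : Function.Bijective t) :
    IsDismantlingOrder G (Fin.cons u (Subtype.val ∘ t) : Fin (n + 2) → V) ↔
      IsDominated G u ∧ IsDismantlingOrder (G.induce {u}ᶜ) t := by
  rw [isDismantlingOrder_cons (bijective_cons_val_iff.2 ht).surjective, isDismantlingOrder_induce]
  refine and_congr_left' ?_
  calc (∃ j, Dominates G (t j) u)
    _ ↔ ∃ w : ({u}ᶜ : Set V), Dominates G w u :=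
        ht.surjective.exists (p := fun w => Dominates G w u) |>.symm
    _ ↔ IsDominated G u := by simp [IsDominated]

theorem dismantlable_iff_exists_isDominated [Nontrivial V] :
    Dismantlable G ↔ ∃ u, IsDominated G u ∧ Dismantlable (G.induce {u}ᶜ) := by
  constructor
  · rintro ⟨n, v, hv, hord⟩
    have : Nontrivial (Fin n) := hv.surjective.nontrivial
    obtain ⟨n, rfl⟩ := Nat.exists_eq_add_of_le' (Fin.nontrivial_iff_two_le.1 this)
    obtain ⟨u, t, rfl⟩ := exists_cons_val_eq hv.injective
    have ht : Function.Bijective t := bijective_cons_val_iff.1 hv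
    obtain ⟨hu, hord⟩ := (isDismantlingOrder_cons_val ht).1 hord
    exact ⟨u, hu, n + 1, t, ht, hord⟩
  · rintro ⟨u, hu, n, t, ht, hord⟩
    obtain ⟨w, hwu, -⟩ := id hu
    obtain ⟨j, -⟩ := ht.surjective ⟨w, hwu⟩
    obtain ⟨n, rfl⟩ := Nat.exists_eq_add_one.2 j.pos
    exact ⟨n + 2, _, bijective_cons_val_iff.2 ht, (isDismantlingOrder_cons_val ht).2 ⟨hu, hord⟩⟩

end Dismantling

theorem stmt17_general {V : Type*} [Finite V] [hV : Nonempty V] (G : SimpleGraph V) :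
    CopWin G 1 ↔ Dismantlable G := by
  induction V using Finite.induction_subsingleton_or_nontrivial generalizing hV with
  | hbase V => exact iff_of_true (copWin_of_subsingleton 1) dismantlable_of_subsingleton
  | hstep V ih =>
    rw [copWin_one_iff_exists_isDominated, dismantlable_iff_exists_isDominated]
    refine exists_congr fun u => and_congr_right fun _ => ih ({u}ᶜ : Set V) ?_ _
    exact Finite.card_subtype_lt (not_not_intro rfl)

/-- Nowakowski–Winkler / Quilliot: a finite connected graph is
1-copwin iff it is dismantlable, i.e. its vertices can be ordered
`v 0, …, v (n-1)` so that each non-final `v i` has its closed neighborhood in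
the subgraph induced on `{v i, …, v (n-1)}` contained in the closed
neighborhood of some later `v j` in that subgraph. -/
theorem stmt17 {V : Type*} [Fintype V] [Nonempty V] (G : SimpleGraph V)
    (hconn : G.Connected) :
    CopWin G 1 ↔
      ∃ (n : ℕ) (v : Fin n → V), Function.Bijective v ∧
        ∀ i : Fin n, (i : ℕ) < n - 1 → ∃ j : Fin n, i < j ∧
          ∀ w : V, (∃ m : Fin n, i ≤ m ∧ v m = w) →
            (w = v i ∨ G.Adj (v i) w) → (w = v j ∨ G.Adj (v j) w) := by
  simp only [stmt17_general, Dismantlable, IsDismantlingOrder, validMove_iff_eq_or_adj,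
    forall_exists_index, and_imp, forall_apply_eq_imp_iff₂, Nat.lt_sub_iff_add_lt]
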